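/- Let 𝒜 be an abelian category with enough injectives satisfying AB4*-n for some nonnegative integer n. Then the category of unbounded complexes over 𝒜 has enough K-injective objects: every complex admits a quasi-isomorphism to a K-injective complex. -/

import Mathlib

/-!
STATEMENT 7 (Theorem 1.3, second part): Let `𝒜` be an abelian category with enough injectives
satisfying AB4*-n for some nonnegative integer `n`.  Then the category of unbounded
`𝒜`-complexes has enough K-injective objects: every complex admits a quasi-isomorphism to a
K-injective complex (in the sense of Spaltenstein).
-/

open CategoryTheory Limits

universe v u

/-- AB4*-`n`: the derived functors of product, computed via injective resolutions, vanish in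
degrees `> n`. -/
def AB4StarMinus (C : Type u) [Category.{v} C] [Abelian C] [HasProducts.{0} C] (n : ℕ) : Prop :=
  ∀ (I : Type) (A : I → C) (R : ∀ i, InjectiveResolution (A i)) (q : ℕ), n < q →
    IsZero ((HomologicalComplex.homologyFunctor C (ComplexShape.up ℕ) q).obj
      (∏ᶜ fun i => (R i).cocomplex))

/-- A complex `I` is K-injective if every morphism from an acyclic complex to `I` is
null-homotopic (equivalently, `Hom•(A, I)` is acyclic for every acyclic `A`). -/
def KInjective {C : Type u} [Category.{v} C] [Abelian C] (I : CochainComplex C ℤ) : Prop :=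
  ∀ (A : CochainComplex C ℤ), (∀ n, A.ExactAt n) → ∀ f : A ⟶ I, Nonempty (Homotopy f 0)

/-!
A limit `I` of a tower `⋯ ⟶ L₂ ⟶ L₁ ⟶ L₀` of degreewise split epimorphisms sits in a short exact
sequence `0 ⟶ I ⟶ ∏ L ⟶ ∏ L ⟶ 0` whose second map is `1 - shift`. The sequence splits degreewise,
so `I` is K-injective when all the `Lₘ` are. Take for `Lₘ` an injective resolution of the
truncation of `N` in degrees `≥ -m`, chosen so that the transition maps have injective kernels. In
degrees `≥ -m` the complexes `N`, `Lₘ`, `Lₘ₊₁`, … all have the same cohomology. The kernels of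
`Lₘ₊ᵢ ⟶ Lₘ` are then injective resolutions up to a shift, so by AB4*-`n` their product is
exact `n` degrees further up. Comparing the sequence above with the one of the constant tower `Lₘ`,
the five lemma shows that `I ⟶ Lₘ` induces an isomorphism in cohomology in degrees `≥ n + 2 - m`.
As `m` is arbitrary, `N ⟶ I` is a quasi-isomorphism.
-/

universe w

open Opposite HomologicalComplex CochainComplex

section Products

variable {D : Type*} [Category* D] {J : Type*}

lemma isSplitEpi_of_isLimit_fan {X Y : J → D} {P : Fan X} {Q : Fan Y} (hP : IsLimit P)
    (hQ : IsLimit Q) (f : ∀ j, X j ⟶ Y j) [∀ j, IsSplitEpi (f j)] (g : P.pt ⟶ Q.pt)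
    (hg : ∀ j, g ≫ Q.proj j = P.proj j ≫ f j) : IsSplitEpi g := by
  refine ⟨⟨⟨Fan.IsLimit.lift hP fun j => Q.proj j ≫ section_ (f j), ?_⟩⟩⟩
  exact Fan.IsLimit.hom_ext hQ _ _ fun j => by simp [hg]

variable [HasZeroMorphisms D] [HasKernels D] [HasProductsOfShape J D] {X Y : J → D}
  (f : ∀ j, X j ⟶ Y j)

lemma piMap_kernel_ι_comp_piMap :
    Limits.Pi.map (fun j => kernel.ι (f j)) ≫ Limits.Pi.map f = 0 :=
  Pi.hom_ext _ _ fun j => by simp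

/-- Kernels commute with products. -/
noncomputable def kernelForkPiMapIsLimit :
    IsLimit (KernelFork.ofι _ (piMap_kernel_ι_comp_piMap f)) :=
  KernelFork.IsLimit.ofι _ _
    (fun t ht => Pi.lift fun j => kernel.lift (f j) (t ≫ Pi.π X j) <| by
      simpa using ht =≫ Pi.π Y j)
    (fun t _ => Pi.hom_ext _ _ fun j => by simp)
    (fun t _ m hm => Pi.hom_ext _ _ fun j => by
      rw [← cancel_mono (kernel.ι (f j))]
      simpa using hm =≫ Pi.π X j)

end Products

section Towers

variable {D : Type*} [Category* D]

/-- The transition map from stage `m + 1` to stage `m` of a tower `⋯ ⟶ F₂ ⟶ F₁ ⟶ F₀`. -/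
abbrev towerMap (F : ℕᵒᵖ ⥤ D) (m : ℕ) : F.obj (op (m + 1)) ⟶ F.obj (op m) :=
  F.map (homOfLE (m.le_add_right 1)).op

lemma map_of_towerMap {W : MorphismProperty D} [W.IsMultiplicative] {F : ℕᵒᵖ ⥤ D}
    (hF : ∀ m, W (towerMap F m)) {i j : ℕ} (hij : i ≤ j) : W (F.map (homOfLE hij).op) := by
  induction j, hij using Nat.le_induction with
  | base => simpa using W.id_mem (F.obj (op i))
  | succ j hij ih =>
    rw [← homOfLE_comp hij (j.le_add_right 1), op_comp, F.map_comp]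
    exact W.comp_mem _ _ (hF j) ih

/-- The endofunctor `m ↦ k + m`, along which a tower is restricted to its stages `≥ k`. -/
def towerShift (k : ℕ) : ℕᵒᵖ ⥤ ℕᵒᵖ :=
  (add_right_mono : Monotone (k + ·)).functor.op

instance (k : ℕ) : (towerShift k).Initial := by
  have : (add_right_mono : Monotone (k + ·)).functor.Final :=
    (Monotone.final_functor_iff _).2 fun m => ⟨m, m.le_add_left k⟩
  exact inferInstanceAs (Functor.op _).Initial

variable [Preadditive D] [HasProductsOfShape ℕ D] (F : ℕᵒᵖ ⥤ D)

/-- The endomorphism `1 - shift` of `∏ₘ Fₘ`, whose kernel is the limit of the tower `F`. -/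
noncomputable def oneSubShift : (∏ᶜ fun m => F.obj (op m)) ⟶ ∏ᶜ fun m => F.obj (op m) :=
  Pi.lift fun m => Pi.π _ m - Pi.π _ (m + 1) ≫ towerMap F m

@[simp]
lemma oneSubShift_π (m : ℕ) : oneSubShift F ≫ Pi.π _ m =
    Pi.π (fun m => F.obj (op m)) m - Pi.π _ (m + 1) ≫ towerMap F m := by
  simp [oneSubShift]

variable {F}

lemma piLift_π_comp_oneSubShift (c : Cone F) :
    Pi.lift (fun m => c.π.app (op m)) ≫ oneSubShift F = 0 :=
  Pi.hom_ext _ _ fun m => by simp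

/-- The Milnor sequence `c ⟶ ∏ₘ Fₘ ⟶ ∏ₘ Fₘ` of a cone `c` over the tower `F`. -/
noncomputable abbrev milnorShortComplex (c : Cone F) : ShortComplex D :=
  .mk _ _ (piLift_π_comp_oneSubShift c)

/-- A morphism killed by `1 - shift` amounts to a cone over the tower. -/
noncomputable abbrev coneOfCompOneSubShift {T : D} (t : T ⟶ ∏ᶜ fun m => F.obj (op m))
    (ht : t ≫ oneSubShift F = 0) : Cone F where
  pt := T
  π := NatTrans.ofOpSequence (fun m => t ≫ Pi.π _ m) fun m => by
    have := ht =≫ Pi.π _ m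
    simpa [sub_eq_zero] using this

/-- The limit of a tower is the kernel of `1 - shift`. -/
noncomputable def milnorKernelForkIsLimit {c : Cone F} (hc : IsLimit c) :
    IsLimit (KernelFork.ofι _ (piLift_π_comp_oneSubShift c)) :=
  KernelFork.IsLimit.ofι _ _
    (fun t ht => hc.lift (coneOfCompOneSubShift t ht))
    (fun t ht => Pi.hom_ext _ _ fun m => by simp)
    (fun t ht u hu => hc.hom_ext fun ⟨m⟩ => by simpa using hu =≫ Pi.π _ m)

/-- The morphism of Milnor sequences induced by a morphism of towers. -/
noncomputable def milnorShortComplexMap {G : ℕᵒᵖ ⥤ D} (φ : F ⟶ G) (c : Cone F) {c' : Cone G}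
    (hc' : IsLimit c') : milnorShortComplex c ⟶ milnorShortComplex c' where
  τ₁ := IsLimit.map c hc' φ
  τ₂ := Limits.Pi.map fun m => φ.app (op m)
  τ₃ := Limits.Pi.map fun m => φ.app (op m)
  comm₁₂ := Pi.hom_ext _ _ fun m => by simp
  comm₂₃ := Pi.hom_ext _ _ fun m => by simp [reassoc_of% oneSubShift_π F m]

end Towers

section SplitTowers

variable {D : Type*} [Category* D] [Preadditive D]

/-- The recursion `σ₀ = 0`, `σₘ₊₁ = (σₘ - prₘ) ≫ sₘ` for the components of a section of
`1 - shift`, given sections `sₘ` of the transition maps. -/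
def oneSubShiftSection {X : ℕ → D} (s : ∀ m, X m ⟶ X (m + 1)) (P : Fan X) :
    ∀ m, P.pt ⟶ X m
  | 0 => 0
  | m + 1 => (oneSubShiftSection s P m - P.proj m) ≫ s m

lemma isSplitEpi_of_proj_sub_proj_comp {X : ℕ → D} {P : Fan X} (hP : IsLimit P)
    (p : ∀ m, X (m + 1) ⟶ X m) [∀ m, IsSplitEpi (p m)] (d : P.pt ⟶ P.pt)
    (hd : ∀ m, d ≫ P.proj m = P.proj m - P.proj (m + 1) ≫ p m) : IsSplitEpi d := by
  refine ⟨⟨⟨Fan.IsLimit.lift hP (oneSubShiftSection (fun m => section_ (p m)) P), ?_⟩⟩⟩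
  exact Fan.IsLimit.hom_ext hP _ _ fun m => by simp [hd, oneSubShiftSection]

end SplitTowers

section DegreewiseLimits

variable {C : Type*} [Category* C] [HasZeroMorphisms C] {ι J : Type*} {c : ComplexShape ι}
  [HasProductsOfShape J C]

/-- Products of complexes are computed degreewise. -/
noncomputable def isLimitFanEval (L : J → HomologicalComplex C c) (j : ι) :
    IsLimit (Fan.mk ((∏ᶜ L).X j) fun m => (Pi.π L m).f j) :=
  isLimitFanMkObjOfIsLimit (eval C c j) L (Pi.π L) (productIsProduct L)

instance {ι' K : Type*} [Category* K] [HasLimitsOfShape K C] {c' : ComplexShape ι'}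
    (e : c.Embedding c') [e.IsRelIff] : PreservesLimitsOfShape K (e.restrictionFunctor C) :=
  preservesLimitsOfShape_of_eval _ fun i =>
    inferInstanceAs (PreservesLimitsOfShape K (eval C c' (e.f i)))

end DegreewiseLimits

section Fibrations

variable {C : Type*} [Category* C] [Abelian C] {J : Type*} [HasProductsOfShape J C]

lemma isKInjective_pi (L : J → CochainComplex C ℤ) [∀ m, (L m).IsKInjective] :
    (∏ᶜ L).IsKInjective where
  nonempty_homotopy_zero {K} f hK := by
    let h (m : J) : Homotopy (f ≫ Pi.π L m) 0 := IsKInjective.homotopyZero _ hK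
    let σ (i j : ℤ) : K.X i ⟶ (∏ᶜ L).X j :=
      Fan.IsLimit.lift (isLimitFanEval L j) fun m => (h m).hom i j
    have hσ (i j : ℤ) (m : J) : σ i j ≫ (Pi.π L m).f j = (h m).hom i j :=
      Fan.IsLimit.fac (isLimitFanEval L j) _ m
    refine ⟨{ hom := σ, zero i j hij := ?_, comm i := ?_ }⟩
    · exact Fan.IsLimit.hom_ext (isLimitFanEval L j) _ _ fun m => by
        simpa [hσ] using (h m).zero i j hij
    · refine Fan.IsLimit.hom_ext (isLimitFanEval L i) _ _ fun m => ?_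
      have := (h m).comm i
      rw [dNext_eq _ (show (ComplexShape.up ℤ).Rel i (i + 1) by simp),
        prevD_eq _ (show (ComplexShape.up ℤ).Rel (i - 1) i by simp)] at this ⊢
      simpa [← Hom.comm, hσ, reassoc_of% hσ] using this

lemma isSplitEpi_f_of_degreewiseEpiWithInjectiveKernel {K L : CochainComplex C ℤ} {p : K ⟶ L}
    (hp : degreewiseEpiWithInjectiveKernel p) (j : ℤ) : IsSplitEpi (p.f j) := by
  obtain ⟨_, _, _, _, ⟨σ⟩⟩ := (Abelian.epiWithInjectiveKernel_iff _).1 (hp j)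
  exact ⟨⟨⟨σ.s, σ.s_g⟩⟩⟩

lemma injective_X_of_degreewiseEpiWithInjectiveKernel {K L : CochainComplex C ℤ} {p : K ⟶ L}
    (hp : degreewiseEpiWithInjectiveKernel p) (j : ℤ) [Injective (L.X j)] :
    Injective (K.X j) := by
  obtain ⟨_, _, _, _, ⟨σ⟩⟩ := (Abelian.epiWithInjectiveKernel_iff _).1 (hp j)
  exact Injective.of_iso σ.isoBinaryBiproduct.symm inferInstance

lemma injective_kernel_X_of_degreewiseEpiWithInjectiveKernel {K L : CochainComplex C ℤ}
    {p : K ⟶ L} (hp : degreewiseEpiWithInjectiveKernel p) (j : ℤ) :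
    Injective ((kernel p).X j) :=
  Injective.of_iso (PreservesKernel.iso (eval C _ j) p).symm (hp j).2

lemma shortExact_kernel_of_degreewiseEpiWithInjectiveKernel {K L : CochainComplex C ℤ}
    {p : K ⟶ L} (hp : degreewiseEpiWithInjectiveKernel p) :
    (ShortComplex.mk (kernel.ι p) p (kernel.condition p)).ShortExact where
  exact := ShortComplex.exact_kernel p
  mono_f := inferInstanceAs (Mono (kernel.ι p))
  epi_g := have (j : ℤ) : Epi (p.f j) := (hp j).1
    epi_of_epi_f p this

lemma shortExact_piMap_kernel_ι {A B : J → CochainComplex C ℤ} {f : ∀ m, A m ⟶ B m}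
    (hf : ∀ m, degreewiseEpiWithInjectiveKernel (f m)) :
    (ShortComplex.mk _ _ (piMap_kernel_ι_comp_piMap f)).ShortExact where
  exact := ShortComplex.exact_of_f_is_kernel _ (kernelForkPiMapIsLimit f)
  mono_f := mono_of_isLimit_fork (kernelForkPiMapIsLimit f)
  epi_g := epi_of_epi_f _ fun j => by
    have (m : J) : IsSplitEpi ((f m).f j) :=
      isSplitEpi_f_of_degreewiseEpiWithInjectiveKernel (hf m) j
    have := isSplitEpi_of_isLimit_fan (isLimitFanEval A j) (isLimitFanEval B j)
      (fun m => (f m).f j) ((Limits.Pi.map f).f j) fun m => by simp [← comp_f]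
    infer_instance

variable [HasProductsOfShape ℕ C] {F : ℕᵒᵖ ⥤ CochainComplex C ℤ}

lemma isSplitEpi_oneSubShift_f (hF : ∀ m, degreewiseEpiWithInjectiveKernel (towerMap F m))
    (j : ℤ) : IsSplitEpi ((oneSubShift F).f j) := by
  have (m : ℕ) : IsSplitEpi ((towerMap F m).f j) :=
    isSplitEpi_f_of_degreewiseEpiWithInjectiveKernel (hF m) j
  refine isSplitEpi_of_proj_sub_proj_comp (isLimitFanEval (fun m => F.obj (op m)) j)
    (fun m => (towerMap F m).f j) _ fun m => ?_
  simp [← comp_f]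

lemma milnorShortComplex_shortExact {c : Cone F} (hc : IsLimit c)
    (hF : ∀ m, degreewiseEpiWithInjectiveKernel (towerMap F m)) :
    (milnorShortComplex c).ShortExact where
  exact := ShortComplex.exact_of_f_is_kernel _ (milnorKernelForkIsLimit hc)
  mono_f := mono_of_isLimit_fork (milnorKernelForkIsLimit hc)
  epi_g := epi_of_epi_f _ fun j => by
    have := isSplitEpi_oneSubShift_f hF j
    infer_instance

lemma isKInjective_of_isLimit {c : Cone F} (hc : IsLimit c)
    (hF : ∀ m, degreewiseEpiWithInjectiveKernel (towerMap F m))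
    [∀ m, (F.obj (op m)).IsKInjective] : c.pt.IsKInjective := by
  have hS := milnorShortComplex_shortExact hc hF
  have hP := isKInjective_pi fun m => F.obj (op m)
  have σ (j : ℤ) : ((milnorShortComplex c).map (eval C _ j)).Splitting := by
    have := isSplitEpi_oneSubShift_f hF j
    have hj := hS.map_of_exact (eval C _ j)
    exact .ofExactOfSection _ hj.exact _ (IsSplitEpi.id ((oneSubShift F).f j)) hj.mono_f
  have hT : trianglehOfDegreewiseSplit (milnorShortComplex c) σ ∈ distTriang _ :=
    (HomotopyCategory.distinguished_iff_iso_trianglehOfDegreewiseSplit _).2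
      ⟨_, σ, ⟨Iso.refl _⟩⟩
  rw [isKInjective_iff_rightOrthogonal] at hP ⊢
  exact ObjectProperty.ext_of_isTriangulatedClosed₁ _ _ hT hP hP

end Fibrations

section HomologySequence

variable {C ι : Type*} [Category* C] [Abelian C] {c : ComplexShape ι}

lemma isIso_homologyMap_g_of_exactAt {S : ShortComplex (HomologicalComplex C c)}
    (hS : S.ShortExact) {i j : ι} (hij : c.Rel i j) (hi : S.X₁.ExactAt i) (hj : S.X₁.ExactAt j) :
    IsIso (homologyMap S.g i) := by
  rw [exactAt_iff_isZero_homology] at hi hj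
  have : Mono (homologyMap S.g i) := (hS.homology_exact₂ i).mono_g (hi.eq_of_src _ _)
  have : Epi (homologyMap S.g i) := (hS.homology_exact₃ i j hij).epi_f (hj.eq_of_tgt _ _)
  exact isIso_of_mono_of_epi _

open HomologySequence ComposableArrows in
lemma isIso_homologyMap_τ₁ {S₁ S₂ : ShortComplex (HomologicalComplex C c)} (φ : S₁ ⟶ S₂)
    (hS₁ : S₁.ShortExact) (hS₂ : S₂.ShortExact) {i j : ι} (hij : c.Rel i j)
    (h₂i : Epi (homologyMap φ.τ₂ i)) (h₃i : IsIso (homologyMap φ.τ₃ i))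
    (h₂j : IsIso (homologyMap φ.τ₂ j)) (h₃j : Mono (homologyMap φ.τ₃ j)) :
    IsIso (homologyMap φ.τ₁ j) :=
  Abelian.isIso_of_epi_of_isIso_of_isIso_of_mono
    (composableArrows₅_exact hS₁ i j hij).δ₀ (composableArrows₅_exact hS₂ i j hij).δ₀
    (δ₀Functor.map (mapComposableArrows₅ φ hS₁ hS₂ i j hij)) h₂i h₃i h₂j h₃j

end HomologySequence

section QuasiIsoGE

/-- The morphisms of complexes inducing an isomorphism in cohomology in all degrees `≥ b`. -/
def quasiIsoGE (C : Type*) [Category* C] [Abelian C] (b : ℤ) :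
    MorphismProperty (CochainComplex C ℤ) :=
  fun _ _ f => ∀ q, b ≤ q → QuasiIsoAt f q

variable {C : Type*} [Category* C] [Abelian C]

instance (b : ℤ) : (quasiIsoGE C b).IsMultiplicative where
  id_mem _ _ _ := inferInstance
  comp_mem _ _ hf hg q hq :=
    have := hf q hq
    have := hg q hq
    inferInstance

instance (b : ℤ) : (quasiIsoGE C b).HasTwoOutOfThreeProperty where
  of_postcomp f g hg hfg q hq := (quasiIsoAt_iff_comp_right f g q (hφ' := hg q hq)).1 (hfg q hq)
  of_precomp f g hf hfg q hq := (quasiIsoAt_iff_comp_left f g q (hφ := hf q hq)).1 (hfg q hq)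

lemma quasiIsoGE_monotone : Monotone (quasiIsoGE C) :=
  fun _ _ hb _ _ _ hf q hq => hf q (hb.trans hq)

lemma exactAt_kernel_of_quasiIsoGE {K L : CochainComplex C ℤ} {p : K ⟶ L} {b : ℤ}
    (hp : degreewiseEpiWithInjectiveKernel p) (hb : quasiIsoGE C b p) {q : ℤ} (hq : b + 1 ≤ q) :
    (kernel p).ExactAt q := by
  have (q : ℤ) (hq : b ≤ q) : IsIso (homologyMap p q) :=
    (quasiIsoAt_iff_isIso_homologyMap p q).1 (hb q hq)
  refine (shortExact_kernel_of_degreewiseEpiWithInjectiveKernel hp).exactAt_X₁ q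
    (this q (by lia)).mono_of_iso fun i hi => (this i ?_).epi_of_iso
  simp only [ComplexShape.up_Rel] at hi
  lia

end QuasiIsoGE

section AB4Star

variable {C : Type*} [Category* C] [Abelian C]

/-- A complex of injectives which is exact in positive degrees, as an injective resolution of its
zeroth cohomology. -/
noncomputable def injectiveResolutionOfExactAt (R : CochainComplex C ℕ)
    [∀ q, Injective (R.X q)] (hR : ∀ q, R.ExactAt (q + 1)) :
    InjectiveResolution (kernel (R.d 0 1)) where
  cocomplex := R
  ι := (fromSingle₀Equiv _ _).symm ⟨kernel.ι (R.d 0 1), kernel.condition _⟩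
  quasiIso := ⟨fun q => by
    cases q with
    | zero =>
      rw [quasiIsoAt₀_iff, ShortComplex.quasiIso_iff_of_zeros]
      · refine (ShortComplex.exact_and_mono_f_iff_of_iso ?_).2
          ⟨ShortComplex.exact_kernel (R.d 0 1), inferInstanceAs (Mono (kernel.ι (R.d 0 1)))⟩
        exact ShortComplex.isoMk (Iso.refl _) (Iso.refl _) (Iso.refl _)
          ((Category.id_comp _).trans <|
            (fromSingle₀Equiv_symm_apply_f_zero _ _).symm.trans (Category.comp_id _).symm)
          ((Category.id_comp _).trans (Category.comp_id _).symm)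
      · rfl
      · rfl
      · exact R.shape 0 0 (by simp)
    | succ q =>
      rw [quasiIsoAt_iff_exactAt _ _ (exactAt_succ_single_obj _ _)]
      exact hR q⟩

lemma exactAt_restriction_embeddingUpIntGE_iff (K : CochainComplex C ℤ) (a : ℤ) (q : ℕ) :
    (K.restriction (ComplexShape.embeddingUpIntGE a)).ExactAt (q + 1) ↔
      K.ExactAt (a + (q + 1 : ℕ)) := by
  rw [exactAt_iff_isZero_homology, exactAt_iff_isZero_homology]
  exact (K.restrictionHomologyIso (ComplexShape.embeddingUpIntGE a) q (q + 1) (q + 2)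
    (by simp) (by simp) (i' := a + q) (j' := a + (q + 1 : ℕ)) (k' := a + (q + 2 : ℕ))
    rfl rfl rfl (by simp; lia) (by simp; lia)).isZero_iff

/-- AB4*-`n` for the products indexed by `J` only. -/
def AB4StarMinusOfShape (J : Type w) (C : Type u) [Category.{v} C] [Abelian C]
    [HasProductsOfShape J C] (n : ℕ) : Prop :=
  ∀ (A : J → C) (R : ∀ j, InjectiveResolution (A j)) (q : ℕ), n < q →
    (∏ᶜ fun j => (R j).cocomplex).ExactAt q

variable {J : Type*} [HasProductsOfShape J C] {n : ℕ} (hC : AB4StarMinusOfShape J C n)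
include hC

lemma exactAt_pi (K : J → CochainComplex C ℤ) [∀ m j, Injective ((K m).X j)] {a : ℤ}
    (hK : ∀ m q, a ≤ q → (K m).ExactAt q) {q : ℤ} (hq : a + n ≤ q) : (∏ᶜ K).ExactAt q := by
  obtain ⟨r, rfl⟩ : ∃ r : ℕ, q = (a - 1) + (r + 1 : ℕ) := ⟨(q - a).toNat, by lia⟩
  let e := ComplexShape.embeddingUpIntGE (a - 1)
  have (m : J) (q : ℕ) : Injective (((K m).restriction e).X q) :=
    inferInstanceAs (Injective ((K m).X (e.f q)))
  let R (m : J) := injectiveResolutionOfExactAt ((K m).restriction e) fun q =>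
    (exactAt_restriction_embeddingUpIntGE_iff _ _ _).2 (hK m _ (by lia))
  rw [← exactAt_restriction_embeddingUpIntGE_iff]
  exact (hC _ R (r + 1) (by lia)).of_iso (PreservesProduct.iso (e.restrictionFunctor C) K).symm

lemma quasiIsoGE_piMap {A B : J → CochainComplex C ℤ} {f : ∀ m, A m ⟶ B m}
    (hf : ∀ m, degreewiseEpiWithInjectiveKernel (f m)) {b : ℤ} (hb : ∀ m, quasiIsoGE C b (f m)) :
    quasiIsoGE C (b + n + 1) (Limits.Pi.map f) := by
  have (m : J) (j : ℤ) : Injective ((kernel (f m)).X j) :=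
    injective_kernel_X_of_degreewiseEpiWithInjectiveKernel (hf m) j
  have hker (q : ℤ) (hq : b + n + 1 ≤ q) : (∏ᶜ fun m => kernel (f m)).ExactAt q :=
    exactAt_pi hC _ (fun m _ => exactAt_kernel_of_quasiIsoGE (hf m) (hb m)) (by lia)
  exact fun q hq => (quasiIsoAt_iff_isIso_homologyMap _ q).2 <|
    isIso_homologyMap_g_of_exactAt (shortExact_piMap_kernel_ι hf) (j := q + 1) (by simp)
      (hker _ hq) (hker _ (by lia))

end AB4Star

section LimitComparison

variable {C : Type*} [Category* C] [Abelian C] [HasProductsOfShape ℕ C] {n : ℕ}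
  (hC : AB4StarMinusOfShape ℕ C n) {F : ℕᵒᵖ ⥤ CochainComplex C ℤ} {c : Cone F} (hc : IsLimit c)
  (hF : ∀ m, degreewiseEpiWithInjectiveKernel (towerMap F m)) {b : ℤ}

include hC hc hF

lemma quasiIsoGE_isLimitMap {G : ℕᵒᵖ ⥤ CochainComplex C ℤ} {c' : Cone G} (hc' : IsLimit c')
    (hG : ∀ m, degreewiseEpiWithInjectiveKernel (towerMap G m)) {φ : F ⟶ G}
    (hφ : ∀ m, degreewiseEpiWithInjectiveKernel (φ.app (op m)))
    (hb : ∀ m, quasiIsoGE C b (φ.app (op m))) :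
    quasiIsoGE C (b + n + 2) (IsLimit.map c hc' φ) := by
  intro q hq
  have hpi (q : ℤ) (hq : b + n + 1 ≤ q) :
      IsIso (homologyMap (Limits.Pi.map fun m => φ.app (op m)) q) :=
    (quasiIsoAt_iff_isIso_homologyMap _ q).1 (quasiIsoGE_piMap hC hφ hb q hq)
  have hpred := hpi (q - 1) (by lia)
  have hq' := hpi q (by lia)
  rw [quasiIsoAt_iff_isIso_homologyMap]
  exact isIso_homologyMap_τ₁ (milnorShortComplexMap φ c hc')
    (milnorShortComplex_shortExact hc hF) (milnorShortComplex_shortExact hc' hG)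
    (i := q - 1) (by simp) hpred.epi_of_iso hpred hq' hq'.mono_of_iso

lemma quasiIsoGE_π_zero (hb : ∀ m, quasiIsoGE C b (towerMap F m)) :
    quasiIsoGE C (b + n + 2) (c.π.app (op 0)) := by
  let φ : F ⟶ (Functor.const ℕᵒᵖ).obj (F.obj (op 0)) :=
    { app m := F.map (homOfLE m.unop.zero_le).op
      naturality _ _ _ := (F.map_comp _ _).symm.trans (Category.comp_id _).symm }
  have hconst := isLimitConstCone ℕᵒᵖ (F.obj (op 0))
  have hπ : IsLimit.map c hconst φ = c.π.app (op 0) :=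
    (Category.comp_id _).symm.trans ((IsLimit.map_π c hconst φ (op 0)).trans (c.w _))
  rw [← hπ]
  exact quasiIsoGE_isLimitMap hC hc hF _ (fun _ => MorphismProperty.id_mem _ _)
    (fun m => map_of_towerMap hF m.zero_le) (fun m => map_of_towerMap hb m.zero_le)

lemma quasiIsoGE_π (k : ℕ) (hb : ∀ m, k ≤ m → quasiIsoGE C b (towerMap F m)) :
    quasiIsoGE C (b + n + 2) (c.π.app (op k)) :=
  quasiIsoGE_π_zero hC ((Functor.Initial.isLimitWhiskerEquiv (towerShift k) c).symm hc)
    (fun m => hF (k + m)) fun m => hb (k + m) (k.le_add_right m)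

end LimitComparison

section ResolutionTower

variable {C : Type*} [Category* C] [Abelian C]

/-- A morphism `ι` from `N` to a bounded below complex of injectives which induces an isomorphism
in cohomology in degrees `≥ a`, such as an injective resolution of a truncation of `N`. -/
structure InjectiveApprox (N : CochainComplex C ℤ) (a : ℤ) where
  complex : CochainComplex C ℤ
  ι : N ⟶ complex
  injective (j : ℤ) : Injective (complex.X j)
  exists_isStrictlyGE : ∃ b : ℤ, complex.IsStrictlyGE b
  quasiIsoGE_ι : quasiIsoGE C a ι

lemma InjectiveApprox.isKInjective {N : CochainComplex C ℤ} {a : ℤ} (A : InjectiveApprox N a) :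
    A.complex.IsKInjective := by
  obtain ⟨b, _⟩ := A.exists_isStrictlyGE
  have := A.injective
  exact isKInjective_of_injective _ b

variable [EnoughInjectives C] {N : CochainComplex C ℤ}

open ZeroObject

lemma exists_injectiveApprox_lift {J : CochainComplex C ℤ} (hJ : ∀ j, Injective (J.X j)) {b : ℤ}
    [J.IsStrictlyGE b] (f : N ⟶ J) (a : ℤ) :
    ∃ (A : InjectiveApprox N a) (p : A.complex ⟶ J),
      degreewiseEpiWithInjectiveKernel p ∧ A.ι ≫ p = f := by
  let d : ℤ := min b a - 1
  have : J.IsStrictlyGE (d + 1) := J.isStrictlyGE_of_ge (d + 1) b (by lia)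
  have : J.IsStrictlyGE d := J.isStrictlyGE_of_ge d b (by lia)
  obtain ⟨K, hK, ι, p, _, _, hp, fac⟩ := Plus.modelCategoryQuillen.cm5a
    (truncGEMap f (d + 1) ≫ inv (J.πTruncGE (d + 1))) d
  refine ⟨⟨K, N.πTruncGE (d + 1) ≫ ι, fun j =>
    injective_X_of_degreewiseEpiWithInjectiveKernel hp j, ⟨d, hK⟩, fun q hq => ?_⟩, p, hp, ?_⟩
  · have := N.quasiIsoAt_πTruncGE (d + 1) q (by lia)
    infer_instance
  · simp [fac, reassoc_of% πTruncGE_naturality f (d + 1)]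

lemma InjectiveApprox.exists_lift {a : ℤ} (A : InjectiveApprox N a) (a' : ℤ) :
    ∃ (A' : InjectiveApprox N a') (p : A'.complex ⟶ A.complex),
      degreewiseEpiWithInjectiveKernel p ∧ A'.ι ≫ p = A.ι := by
  obtain ⟨b, _⟩ := A.exists_isStrictlyGE
  exact exists_injectiveApprox_lift A.injective (b := b) A.ι a'

lemma nonempty_injectiveApprox (N : CochainComplex C ℤ) (a : ℤ) :
    Nonempty (InjectiveApprox N a) := by
  have hX (j : ℤ) : IsZero ((0 : CochainComplex C ℤ).X j) := (eval C _ j).map_isZero (isZero_zero _)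
  have : (0 : CochainComplex C ℤ).IsStrictlyGE 0 :=
    (isStrictlyGE_iff 0 0).2 fun j _ => hX j
  obtain ⟨A, -⟩ := exists_injectiveApprox_lift (b := 0) (fun j => (hX j).injective) (0 : N ⟶ 0) a
  exact ⟨A⟩

lemma exists_injectiveTower (N : CochainComplex C ℤ) :
    ∃ (F : ℕᵒᵖ ⥤ CochainComplex C ℤ) (φ : (Functor.const ℕᵒᵖ).obj N ⟶ F),
      (∀ m, (F.obj (op m)).IsKInjective) ∧
      (∀ m, degreewiseEpiWithInjectiveKernel (towerMap F m)) ∧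
      ∀ m : ℕ, quasiIsoGE C (-m) (φ.app (op m)) := by
  choose next p hp hι using fun (m : ℕ) (A : InjectiveApprox N (-m)) =>
    A.exists_lift (-(m + 1 : ℕ))
  let A : ∀ m : ℕ, InjectiveApprox N (-m) := Nat.rec (nonempty_injectiveApprox N _).some next
  let F : ℕᵒᵖ ⥤ CochainComplex C ℤ :=
    Functor.ofOpSequence (X := fun m => (A m).complex) fun m => p m (A m)
  have hF (m : ℕ) : towerMap F m = p m (A m) := Functor.ofOpSequence_map_homOfLE_succ _ m
  have hA (m : ℕ) : (A m).ι = (A (m + 1)).ι ≫ towerMap F m := by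
    rw [hF]
    exact (hι m (A m)).symm
  refine ⟨F, NatTrans.ofOpSequence (fun m => (A m).ι) fun m => (Category.id_comp _).trans (hA m),
    fun m => (A m).isKInjective, fun m => ?_, fun m => (A m).quasiIsoGE_ι⟩
  rw [hF]
  exact hp m (A m)

end ResolutionTower

section LiftToLimit

variable {C : Type*} [Category* C] [Abelian C] {F : ℕᵒᵖ ⥤ CochainComplex C ℤ}

lemma quasiIsoGE_towerMap (c : Cone F) (hc : ∀ m : ℕ, quasiIsoGE C (-m) (c.π.app (op m)))
    {k m : ℕ} (hkm : k ≤ m) : quasiIsoGE C (-k) (towerMap F m) := by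
  have hπ (i : ℕ) (hi : k ≤ i) : quasiIsoGE C (-k) (c.π.app (op i)) :=
    quasiIsoGE_monotone (show (-i : ℤ) ≤ -k by lia) _ (hc i)
  refine (quasiIsoGE C (-k)).of_precomp _ _ (hπ (m + 1) (by lia)) ?_
  rw [c.w]
  exact hπ m hkm

lemma quasiIso_lift [HasProductsOfShape ℕ C] {n : ℕ} (hC : AB4StarMinusOfShape ℕ C n)
    (hF : ∀ m, degreewiseEpiWithInjectiveKernel (towerMap F m)) {c : Cone F}
    (hc : ∀ m : ℕ, quasiIsoGE C (-m) (c.π.app (op m))) {c' : Cone F} (hc' : IsLimit c') :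
    QuasiIso (hc'.lift c) := by
  have hlift (k : ℕ) : quasiIsoGE C (-k + n + 2) (hc'.lift c) := by
    refine (quasiIsoGE C _).of_postcomp _ (c'.π.app (op k))
      (quasiIsoGE_π hC hc' hF k fun m => quasiIsoGE_towerMap c hc) ?_
    rw [hc'.fac]
    exact quasiIsoGE_monotone (show (-k : ℤ) ≤ -k + n + 2 by lia) _ (hc k)
  exact ⟨fun q => hlift (n + 2 - q).toNat q (by lia)⟩

end LiftToLimit

theorem enough_K_injectives_of_ab4StarMinus_general
    {C : Type u} [Category.{v} C] [Abelian C] [HasCountableProducts C] [EnoughInjectives C]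
    (n : ℕ) (hC : AB4StarMinusOfShape ℕ C n) (N : CochainComplex C ℤ) :
    ∃ (I : CochainComplex C ℤ) (f : N ⟶ I), KInjective I ∧ QuasiIso f := by
  obtain ⟨F, π, hK, hF, hπ⟩ := exists_injectiveTower N
  have : HasLimit F := hasLimit_of_equalizer_and_product F
  have hI : (limit F).IsKInjective := isKInjective_of_isLimit (limit.isLimit F) hF
  have hf : QuasiIso (limit.lift F ⟨N, π⟩) := quasiIso_lift hC hF hπ (limit.isLimit F)
  exact ⟨limit F, limit.lift F ⟨N, π⟩, fun A hA g => hI.nonempty_homotopy_zero g hA, hf⟩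

theorem enough_K_injectives_of_ab4StarMinus
    {C : Type u} [Category.{v} C] [Abelian C] [HasProducts.{0} C] [EnoughInjectives C]
    (n : ℕ) (hC : AB4StarMinus C n) (N : CochainComplex C ℤ) :
    ∃ (I : CochainComplex C ℤ) (f : N ⟶ I), KInjective I ∧ QuasiIso f :=
  enough_K_injectives_of_ab4StarMinus_general n
    (fun A R q hq => (exactAt_iff_isZero_homology _ _).2 (hC ℕ A R q hq)) N
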